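/- Let θ be a regular cardinal ≥ ω₂. Then for every function F : [H_θ]^{<ω} → H_θ there exists ξ < ω₁ such that Player II has a winning strategy in the game G₂(θ, F, ξ). -/

import Mathlib

open Set Cardinal Ordinal

noncomputable section

def omega1 : Ordinal.{0} := (aleph 1).ord
def omega2 : Ordinal.{0} := (aleph 2).ord

/-- `[A]^ω`: countably infinite subsets of `A`. -/
def sOmega {α : Type*} (A : Set α) : Set (Set α) :=
  {x | x ⊆ A ∧ x.Countable ∧ x.Infinite}

/-- club subsets of `[A]^ω`. -/
def IsClubOmega {α : Type*} (A : Set α) (C : Set (Set α)) : Prop :=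
  C ⊆ sOmega A ∧ (∀ x ∈ sOmega A, ∃ y ∈ C, x ⊆ y) ∧
    ∀ f : ℕ → Set α, (∀ n, f n ∈ C) → (∀ n, f n ⊆ f (n + 1)) → (⋃ n, f n) ∈ C

/-- stationary subsets of `[A]^ω`. -/
def IsStationaryOmega {α : Type*} (A : Set α) (S : Set (Set α)) : Prop :=
  ∀ C, IsClubOmega A C → (S ∩ C).Nonempty

/-- A ZFC set is a (von Neumann) ordinal iff it is a transitive set of transitive
sets; for such a set, `ZFSet.rank` recovers the corresponding `Ordinal`. -/
def IsOrd (x : ZFSet.{0}) : Prop :=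
  x.IsTransitive ∧ ∀ y ∈ x, ZFSet.IsTransitive y

/-- `H_θ`: the class of sets hereditarily of cardinality `< θ`, i.e. sets whose
transitive closure has cardinality `< θ`. -/
def HSet (θ : Cardinal.{0}) : Set ZFSet.{0} :=
  {x | ∃ t : ZFSet, t.IsTransitive ∧ x.toSet ⊆ t.toSet ∧ #t.toSet < Cardinal.lift.{1} θ}

/-- `y` is closed under the finitary function `F`. -/
def ClosedUnder {α : Type*} (F : Finset α → α) (y : Set α) : Prop :=
  ∀ s : Finset α, ↑s ⊆ y → F s ∈ y

/-- `cl_F(x)`: the smallest superset of `x` closed under `F`. -/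
def clF {α : Type*} (F : Finset α → α) (x : Set α) : Set α :=
  ⋂₀ {y | x ⊆ y ∧ ClosedUnder F y}

namespace StmtAux

/-- Legal moves. -/
def Legal (θ : Cardinal.{0}) (x : ZFSet.{0}) : Prop :=
  x.toSet ⊆ HSet θ ∧ #x.toSet = aleph 1

/-- Countable ordinals. -/
def COrd (x : ZFSet.{0}) : Prop := IsOrd x ∧ x.toSet.Countable

theorem mem_toSet' (x y : ZFSet.{0}) : y ∈ x.toSet ↔ y ∈ x := Iff.rfl

theorem clF_mono {α : Type*} (F : Finset α → α) {x y : Set α} (h : x ⊆ y) :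
    clF F x ⊆ clF F y := by
  intro z hz w hw
  exact hz w ⟨h.trans hw.1, hw.2⟩

theorem subset_clF {α : Type*} (F : Finset α → α) (x : Set α) : x ⊆ clF F x :=
  fun z hz w hw => hw.1 hz

theorem clF_closed {α : Type*} (F : Finset α → α) (x : Set α) : ClosedUnder F (clF F x) := by
  intro s hs w hw
  exact hw.2 s (fun z hz => hs hz w hw)

theorem clF_countable {α : Type*} (F : Finset α → α) (x : Set α) (hx : x.Countable) :
    (clF F x).Countable := by
  classical
  let step : Set α → Set α := fun y => y ∪ F '' {s : Finset α | ↑s ⊆ y}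
  let X : ℕ → Set α := fun n => Nat.rec x (fun _ y => step y) n
  have hXs : ∀ n, X (n + 1) = step (X n) := fun n => rfl
  have hmono : Monotone X := monotone_nat_of_le_succ (fun n => by
    rw [hXs]; exact subset_union_left)
  have hc : ∀ n, (X n).Countable := by
    intro n
    induction n with
    | zero => exact hx
    | succ n ih =>
      rw [hXs]
      refine ih.union (Countable.image ?_ _)
      have h1 := (Set.countable_ofPred_finite_subset ih).preimage_of_injOn
        (f := fun s : Finset α => (s : Set α)) Finset.coe_injective.injOn
      refine h1.mono ?_
      intro s hs
      exact ⟨s.finite_toSet, hs⟩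
  refine (countable_iUnion hc).mono ?_
  intro z hz
  refine hz _ ⟨subset_iUnion X 0, ?_⟩
  intro s hs
  obtain ⟨n, hn⟩ := hmono.directed_le.exists_mem_subset_of_finset_subset_biUnion hs
  exact mem_iUnion.2 ⟨n + 1, by rw [hXs]; exact Or.inr ⟨s, hn, rfl⟩⟩

theorem clF_iUnion {α : Type*} (F : Finset α → α) (X : ℕ → Set α) (hX : Monotone X) :
    clF F (⋃ n, X n) ⊆ ⋃ n, clF F (X n) := by
  intro z hz
  refine hz _ ⟨iUnion_mono fun n => subset_clF F _, ?_⟩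
  intro s hs
  have hm : Monotone (fun n => clF F (X n)) := fun a b h => clF_mono F (hX h)
  obtain ⟨n, hn⟩ := hm.directed_le.exists_mem_subset_of_finset_subset_biUnion hs
  exact mem_iUnion.2 ⟨n, clF_closed F _ s hn⟩

theorem COrd.mem {x y : ZFSet.{0}} (hx : COrd x) (hy : y ∈ x) : COrd y := by
  refine ⟨⟨hx.1.2 y hy, fun z hz => hx.1.2 z (hx.1.1 y hy hz)⟩, hx.2.mono ?_⟩
  intro z hz
  exact hx.1.1 y hy hz

theorem COrd_iUnion {ι : Type*} [Countable ι] (f : ι → ZFSet.{0}) (hf : ∀ i, COrd (f i)) :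
    COrd (ZFSet.iUnion f) := by
  refine ⟨⟨?_, ?_⟩, ?_⟩
  · intro y hy z hz
    rw [ZFSet.mem_iUnion] at hy ⊢
    obtain ⟨i, hi⟩ := hy
    exact ⟨i, (hf i).1.1 y hi hz⟩
  · intro y hy
    rw [ZFSet.mem_iUnion] at hy
    obtain ⟨i, hi⟩ := hy
    exact (hf i).1.2 y hi
  · refine (countable_iUnion fun i => (hf i).2).mono ?_
    intro y hy
    rw [mem_toSet', ZFSet.mem_iUnion] at hy
    exact mem_iUnion.2 hy

theorem COrd_succ {x : ZFSet.{0}} (hx : COrd x) : COrd (insert x x) := by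
  refine ⟨⟨?_, ?_⟩, ?_⟩
  · intro y hy z hz
    rw [ZFSet.mem_insert_iff] at hy ⊢
    rcases hy with rfl | hy
    · exact Or.inr hz
    · exact Or.inr (hx.1.1 y hy hz)
  · intro y hy
    rw [ZFSet.mem_insert_iff] at hy
    rcases hy with rfl | hy
    · exact hx.1.1
    · exact hx.1.2 y hy
  · refine (hx.2.insert x).mono ?_
    intro y hy
    rw [mem_toSet', ZFSet.mem_insert_iff] at hy
    exact hy

theorem COrd_empty : COrd ∅ := by
  refine ⟨⟨ZFSet.isTransitive_empty, fun y hy => (ZFSet.notMem_empty y hy).elim⟩, ?_⟩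
  exact countable_empty.mono (fun y hy => (ZFSet.notMem_empty y hy).elim)

theorem cover (S : Set ZFSet.{0}) (hS : S.Countable) :
    ∃ η, COrd η ∧ ∀ z ∈ S, COrd z → z ∈ η := by
  have : Countable {z // z ∈ S ∧ COrd z} := (hS.mono (fun z hz => hz.1 : {z | z ∈ S ∧ COrd z} ⊆ S))
  refine ⟨ZFSet.iUnion (fun z : {z // z ∈ S ∧ COrd z} => insert z.1 z.1),
    COrd_iUnion _ (fun z => COrd_succ z.2.2), ?_⟩
  intro z hz hc
  rw [ZFSet.mem_iUnion]
  exact ⟨⟨z, hz, hc⟩, by simp⟩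

/-- The closure adds no new countable ordinals. -/
def Ok (F : Finset ZFSet.{0} → ZFSet.{0}) (ξ : ZFSet.{0}) (X : Set ZFSet.{0}) : Prop :=
  ∀ z ∈ clF F (ξ.toSet ∪ X), COrd z → z ∈ ξ

theorem Ok.mono {F ξ} {X Y : Set ZFSet.{0}} (h : Ok F ξ Y) (hXY : X ⊆ Y) : Ok F ξ X :=
  fun z hz => h z (clF_mono F (union_subset_union_right _ hXY) hz)

theorem exists_ok (F : Finset ZFSet.{0} → ZFSet.{0}) (X : Set ZFSet.{0}) (hX : X.Countable) :
    ∃ ξ, COrd ξ ∧ Ok F ξ X := by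
  have key : ∀ ξ : {x // COrd x}, ∃ η : {x // COrd x},
      ∀ z ∈ clF F (ξ.1.toSet ∪ X), COrd z → z ∈ η.1 := by
    intro ξ
    obtain ⟨η, h1, h2⟩ := cover _ (clF_countable F _ (ξ.2.2.union hX))
    exact ⟨⟨η, h1⟩, h2⟩
  choose g hg using key
  let x : ℕ → {x // COrd x} := fun n => Nat.rec ⟨∅, COrd_empty⟩ (fun _ y => g y) n
  have hx : ∀ n, x (n + 1) = g (x n) := fun n => rfl
  have hm : Monotone (fun n => (x n).1.toSet) := by
    refine monotone_nat_of_le_succ fun n z hz => ?_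
    show z ∈ (x (n + 1)).1
    rw [hx]
    exact hg _ z (subset_clF F _ (Or.inl hz)) ((x n).2.mem hz)
  refine ⟨ZFSet.iUnion (fun n => (x n).1), COrd_iUnion _ (fun n => (x n).2), ?_⟩
  intro z hz hc
  have e : (ZFSet.iUnion (fun n => (x n).1)).toSet ∪ X = ⋃ n, ((x n).1.toSet ∪ X) := by
    rw [← iUnion_union]
    congr 1
    ext w
    rw [mem_toSet', ZFSet.mem_iUnion, mem_iUnion]
    rfl
  rw [e] at hz
  obtain ⟨n, hn⟩ := mem_iUnion.1
    (clF_iUnion F _ (fun a b h => union_subset_union_left X (hm h)) hz)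
  rw [ZFSet.mem_iUnion]
  exact ⟨n + 1, by rw [hx]; exact hg _ z hn hc⟩

/-- Finite initial segment of a sequence. -/
def P (K : ℕ → ZFSet.{0}) (n : ℕ) : List ZFSet.{0} := List.ofFn (fun i : Fin n => K i)

theorem P_length (K n) : (P K n).length = n := by simp [P]

theorem P_succ (K n) : P K (n + 1) = P K n ++ [K n] := by
  rw [P, List.ofFn_succ_last]
  rfl

theorem mem_P {K n x} : x ∈ P K n ↔ ∃ i < n, K i = x := by
  simp only [P, List.mem_ofFn]
  exact ⟨fun ⟨i, hi⟩ => ⟨i, i.2, hi⟩, fun ⟨i, h, hi⟩ => ⟨⟨i, h⟩, hi⟩⟩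

/-- Player I wins from the position `l`. -/
def Iwin (θ : Cardinal.{0}) (F : Finset ZFSet.{0} → ZFSet.{0}) (ξ : ZFSet.{0})
    (l : List ZFSet.{0}) : Prop :=
  ∃ σ : List ZFSet.{0} → ZFSet.{0}, (∀ m, Legal θ (σ m)) ∧ ∀ K : ℕ → ZFSet.{0},
    P K l.length = l → (∀ n, l.length ≤ n → Legal θ (K n) ∧ σ (P K n) ⊆ K n) →
      ¬ Ok F ξ (Set.range K)

theorem ok_of_not_Iwin {θ F ξ l} {J₀ : ZFSet.{0}} (hJ : Legal θ J₀) (h : ¬ Iwin θ F ξ l) :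
    Ok F ξ {x | x ∈ l} := by
  by_contra hb
  refine h ⟨fun _ => J₀, fun _ => hJ, fun K hK _ hok => hb (hok.mono ?_)⟩
  intro x hx
  rw [mem_ofPred_eq, ← hK, mem_P] at hx
  obtain ⟨i, -, hi⟩ := hx
  exact ⟨i, hi⟩

theorem step_of_not_Iwin {θ F ξ l} {J : ZFSet.{0}} (hJ : Legal θ J) (h : ¬ Iwin θ F ξ l) :
    ∃ K, Legal θ K ∧ J ⊆ K ∧ ¬ Iwin θ F ξ (l ++ [K]) := by
  by_contra hb
  push Not at hb
  have key : ∀ K, ∃ σ : List ZFSet.{0} → ZFSet.{0}, (∀ m, Legal θ (σ m)) ∧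
      (Legal θ K → J ⊆ K → ∀ L : ℕ → ZFSet.{0}, P L (l ++ [K]).length = l ++ [K] →
      (∀ n, (l ++ [K]).length ≤ n → Legal θ (L n) ∧ σ (P L n) ⊆ L n) →
      ¬ Ok F ξ (Set.range L)) := by
    intro K
    by_cases hK : Legal θ K ∧ J ⊆ K
    · obtain ⟨σ, h1, h2⟩ := hb K hK.1 hK.2
      exact ⟨σ, h1, fun _ _ => h2⟩
    · exact ⟨fun _ => J, fun _ => hJ, fun h1 h2 => (hK ⟨h1, h2⟩).elim⟩
  choose S hS1 hS2 using key
  refine h ⟨fun m => if hm : l.length < m.length then S m[l.length] m else J, ?_, ?_⟩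
  · intro m
    dsimp only
    split_ifs with hm
    · exact hS1 _ _
    · exact hJ
  · intro K hK hrun
    have h0 := hrun l.length le_rfl
    simp only [P_length, lt_irrefl, dite_false] at h0
    refine hS2 (K l.length) h0.1 h0.2 K ?_ ?_
    · rw [List.length_append, List.length_singleton, P_succ, hK]
    · intro n hn
      simp only [List.length_append, List.length_singleton] at hn
      have h1 := hrun n (by omega)
      have h2 : l.length < (P K n).length := by rw [P_length]; omega
      dsimp only at h1
      rw [dif_pos h2] at h1
      have h3 : (P K n)[l.length] = K l.length := by simp [P]
      rw [h3] at h1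
      exact h1

/-- Index type of size `ℵ₁`. -/
abbrev Idx : Type 1 := Set.Iio (aleph 1 : Cardinal.{0}).ord

theorem mk_Idx : #Idx = aleph 1 := by
  rw [Cardinal.mk_Iio_ordinal, card_ord, lift_aleph, Ordinal.lift_one]

theorem exists_idx {x : ZFSet.{0}} (hx : COrd x) : ∃ i : Idx, i.1.toZFSet = x := by
  have ho : x.IsOrdinal := ZFSet.isOrdinal_iff_forall_mem_isTransitive.2 hx.1
  refine ⟨⟨x.rank, ?_⟩, ho.toZFSet_rank_eq⟩
  rw [mem_Iio, lt_ord, ← Ordinal.card_toZFSet, ho.toZFSet_rank_eq]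
  have h1 : #x ≤ ℵ₀ := le_aleph0_iff_set_countable.2 hx.2
  rw [ZFSet.cardinalMk_coe_sort, lift_le_aleph0] at h1
  exact h1.trans_lt aleph0_lt_aleph_one

theorem union_legal {θ : Cardinal.{0}} (f : Idx → ZFSet.{0}) (hf : ∀ i, Legal θ (f i)) :
    Legal θ (ZFSet.iUnion f) := by
  have e : (ZFSet.iUnion f).toSet = ⋃ i, (f i).toSet := by
    ext w
    rw [mem_toSet', ZFSet.mem_iUnion, mem_iUnion]
    rfl
  refine ⟨?_, ?_⟩
  · rw [e]
    exact iUnion_subset fun i => (hf i).1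
  · rw [e]
    apply le_antisymm
    · refine (mk_iUnion_le _).trans ?_
      simp only [(hf _).2, mk_Idx]
      have hs : (⨆ _ : Idx, (aleph 1 : Cardinal.{1})) ≤ aleph 1 := ciSup_le' fun i => le_rfl
      refine (mul_le_mul' le_rfl hs).trans ?_
      exact (mul_eq_self (aleph0_le_aleph 1)).le
    · have : Nonempty Idx := by
        rw [← mk_ne_zero_iff, mk_Idx]
        exact (aleph_pos 1).ne'
      obtain ⟨i⟩ := this
      rw [← (hf i).2]
      exact mk_le_mk_of_subset (subset_iUnion (fun i => (f i).toSet) i)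

theorem exists_not_Iwin (θ : Cardinal.{0}) (F : Finset ZFSet.{0} → ZFSet.{0}) :
    ∃ ξ, COrd ξ ∧ ¬ Iwin θ F ξ [] := by
  by_contra hb
  push Not at hb
  have hne : ∃ σ : List ZFSet.{0} → ZFSet.{0}, ∀ m, Legal θ (σ m) := by
    obtain ⟨σ, h, -⟩ := hb ∅ COrd_empty
    exact ⟨σ, h⟩
  have key : ∀ ξ : ZFSet.{0}, ∃ σ : List ZFSet.{0} → ZFSet.{0}, (∀ m, Legal θ (σ m)) ∧
      (COrd ξ → ∀ K : ℕ → ZFSet.{0},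
        (∀ n, Legal θ (K n) ∧ σ (P K n) ⊆ K n) → ¬ Ok F ξ (Set.range K)) := by
    intro ξ
    by_cases hξ : COrd ξ
    · obtain ⟨σ, h1, h2⟩ := hb ξ hξ
      exact ⟨σ, h1, fun _ K hK => h2 K (by simp [P]) (fun n _ => hK n)⟩
    · obtain ⟨σ, h⟩ := hne
      exact ⟨σ, h, fun h => (hξ h).elim⟩
  choose S hS1 hS2 using key
  let U : List ZFSet.{0} → ZFSet.{0} := fun m => ZFSet.iUnion (fun i : Idx => S i.1.toZFSet m)
  let L : ℕ → List ZFSet.{0} := fun n => Nat.rec [] (fun _ m => m ++ [U m]) n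
  let K : ℕ → ZFSet.{0} := fun n => U (L n)
  have hL : ∀ n, P K n = L n := by
    intro n
    induction n with
    | zero => simp [P, L]
    | succ n ih => rw [P_succ, ih]
  obtain ⟨ξ, hξ, hok⟩ := exists_ok F (Set.range K) (countable_range K)
  refine hS2 ξ hξ K (fun n => ⟨union_legal _ fun i => hS1 _ _, ?_⟩) hok
  rw [hL]
  obtain ⟨i, rfl⟩ := exists_idx hξ
  exact ZFSet.subset_iUnion (fun i : Idx => S i.1.toZFSet (L n)) i

end StmtAux

open StmtAux

/-- In the game `G₂(θ, F, ξ)`, at round `n` Player I plays `J n ∈ [H_θ]^{ω₁}` and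
Player II answers with `K n ∈ [H_θ]^{ω₁}`, `K n ⊇ J n` (both coded as ZFC sets).
A strategy for Player II is coded by a function `τ` on finite sequences of I's moves.
Player II wins iff `cl_F(ξ ∪ {K n : n < ω}) ∩ ω₁ = ξ`, expressed here by saying that
the countable von Neumann ordinals in the closure are exactly the elements of `ξ`.
The theorem: for some `ξ < ω₁` (a countable ZFC ordinal) Player II has a winning
strategy. -/
theorem stmt8 (θ : Cardinal.{0}) (hreg : θ.IsRegular) (hθ : aleph 2 ≤ θ)
    (F : Finset ZFSet.{0} → ZFSet.{0})
    (hF : ∀ s : Finset ZFSet, ↑s ⊆ HSet θ → F s ∈ HSet θ) :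
    ∃ ξ : ZFSet, IsOrd ξ ∧ ξ.toSet.Countable ∧
      ∃ τ : List ZFSet → ZFSet,
        ∀ J : ℕ → ZFSet,
          (∀ n, (J n).toSet ⊆ HSet θ ∧ #(J n).toSet = aleph 1) →
          ∀ K : ℕ → ZFSet, (∀ n, K n = τ (List.ofFn fun i : Fin (n + 1) => J i)) →
            (∀ n, (K n).toSet ⊆ HSet θ ∧ #(K n).toSet = aleph 1 ∧ J n ⊆ K n) ∧
            {z ∈ clF F (ξ.toSet ∪ Set.range K) | IsOrd z ∧ z.toSet.Countable} =
              ξ.toSet := by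
  classical
  obtain ⟨ξ, hξ, hwin⟩ := exists_not_Iwin θ F
  refine ⟨ξ, hξ.1, hξ.2, ?_⟩
  have key : ∀ (l : List ZFSet.{0}) (J : ZFSet.{0}), ∃ K : ZFSet.{0},
      Legal θ J → ¬ Iwin θ F ξ l → Legal θ K ∧ J ⊆ K ∧ ¬ Iwin θ F ξ (l ++ [K]) := by
    intro l J
    by_cases h : Legal θ J ∧ ¬ Iwin θ F ξ l
    · obtain ⟨K, hK⟩ := step_of_not_Iwin h.1 h.2
      exact ⟨K, fun _ _ => hK⟩
    · exact ⟨J, fun h1 h2 => (h ⟨h1, h2⟩).elim⟩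
  choose pick hpick using key
  let L : List ZFSet.{0} → List ZFSet.{0} :=
    fun js => js.foldl (fun l J => l ++ [pick l J]) []
  have hLs : ∀ js J, L (js ++ [J]) = L js ++ [pick (L js) J] := by
    intro js J
    simp [L, List.foldl_append]
  refine ⟨fun js => ((L js).getLast?).getD ∅, ?_⟩
  intro J hJ K hK
  have hK' : ∀ n, K n = pick (L (P J n)) (J n) := by
    intro n
    have := hK n
    change K n = ((L (P J (n + 1))).getLast?).getD ∅ at this
    rw [this, P_succ, hLs]
    simp
  have hLP : ∀ n, L (P J n) = P K n := by
    intro n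
    induction n with
    | zero => simp [P, L]
    | succ n ih => rw [P_succ, hLs, P_succ, ← ih, hK' n]
  simp only [hLP] at hK'
  have hnw : ∀ n, ¬ Iwin θ F ξ (P K n) := by
    intro n
    induction n with
    | zero => simpa [P] using hwin
    | succ n ih =>
      rw [P_succ]
      have := (hpick (P K n) (J n) (hJ n) ih).2.2
      rwa [← hK' n] at this
  have hstep : ∀ n, Legal θ (K n) ∧ J n ⊆ K n := by
    intro n
    have := hpick (P K n) (J n) (hJ n) (hnw n)
    rw [← hK' n] at this
    exact ⟨this.1, this.2.1⟩
  refine ⟨fun n => ⟨(hstep n).1.1, (hstep n).1.2, (hstep n).2⟩, ?_⟩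
  ext z
  constructor
  · rintro ⟨hz, hc⟩
    have hm : Monotone (fun n => ξ.toSet ∪ {x | x ∈ P K n}) := by
      refine monotone_nat_of_le_succ fun n => union_subset_union_right _ ?_
      intro x hx
      simp only [mem_ofPred_eq, P_succ, List.mem_append] at hx ⊢
      exact Or.inl hx
    have e : ξ.toSet ∪ Set.range K ⊆ ⋃ n, (ξ.toSet ∪ {x | x ∈ P K n}) := by
      rintro x (hx | ⟨n, rfl⟩)
      · exact mem_iUnion.2 ⟨0, Or.inl hx⟩
      · exact mem_iUnion.2 ⟨n + 1, Or.inr (mem_P.2 ⟨n, Nat.lt_succ_self n, rfl⟩)⟩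
    obtain ⟨n, hn⟩ := mem_iUnion.1 (clF_iUnion F _ hm (clF_mono F e hz))
    exact ok_of_not_Iwin (hJ 0) (hnw n) z hn hc
  · intro hz
    exact ⟨subset_clF F _ (Or.inl hz), hξ.mem hz⟩

end
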